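/- Let W̃ = (G̃, m̃) be a ℤ-periodic tree with standard weights and quotient graph W = (G, m). Then the Laplacian Δ^{W̃} has full spectrum [0, 2] if and only if G̃ is the standard lattice ℤ, if and only if G is a cycle graph, if and only if G has no vertex of degree 1. -/

import Mathlib

open Matrix BigOperators

/-- Sum of edge weights over edges incident to `v` (loops counted twice). -/
noncomputable def edgeSumAt {V E : Type*} [Fintype E] [DecidableEq V] (src tgt : E → V)
    (mE : E → ℝ) (v : V) : ℝ :=
  ∑ e : E, ((if src e = v then mE e else 0) + (if tgt e = v then mE e else 0))

/-- Relative weight `ρ(v) = m(E_v)/m(v)`. -/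
noncomputable def rho {V E : Type*} [Fintype E] [DecidableEq V] (src tgt : E → V)
    (m : V → ℝ) (mE : E → ℝ) (v : V) : ℝ :=
  edgeSumAt src tgt mE v / m v

/-- Matrix of the discrete magnetic Laplacian (in the orthonormal basis
`m(v)^{-1/2} 1_v` of `ℓ²(V,m)`), with unimodular phases `z e` on the edges. -/
noncomputable def dmlPhase {V E : Type*} [Fintype E] [DecidableEq V] (src tgt : E → V)
    (m : V → ℝ) (mE : E → ℝ) (z : E → ℂ) : Matrix V V ℂ :=
  fun u v =>
    (if u = v then ((rho src tgt m mE u : ℝ) : ℂ) else 0) -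
      ((1 / (Real.sqrt (m u) * Real.sqrt (m v)) : ℝ) : ℂ) *
        ∑ e : E, (mE e : ℂ) *
          ((if src e = v ∧ tgt e = u then z e else 0) +
           (if tgt e = v ∧ src e = u then starRingEnd ℂ (z e) else 0))

/-- Discrete magnetic Laplacian with vector potential `α : E → ℝ`. -/
noncomputable def dml {V E : Type*} [Fintype E] [DecidableEq V] (src tgt : E → V)
    (m : V → ℝ) (mE : E → ℝ) (α : E → ℝ) : Matrix V V ℂ :=
  dmlPhase src tgt m mE (fun e => Complex.exp ((α e : ℂ) * Complex.I))

/-- Real spectrum of a complex matrix. -/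
noncomputable def realSpec {V : Type*} [Fintype V] [DecidableEq V] (M : Matrix V V ℂ) : Set ℝ :=
  {x : ℝ | (x : ℂ) ∈ spectrum ℂ M}

/-- Degree of a vertex in the multigraph (loops counted twice). -/
def mdeg {V E : Type*} [Fintype E] [DecidableEq V] (src tgt : E → V) (v : V) : ℕ :=
  ∑ e : E, ((if src e = v then 1 else 0) + (if tgt e = v then 1 else 0))

/-- Simple graph underlying the multigraph restricted to the edge set `S`. -/
def multiGraph {V E : Type*} (src tgt : E → V) (S : Set E) : SimpleGraph V :=
  SimpleGraph.fromRel (fun u v => ∃ e ∈ S, src e = u ∧ tgt e = v)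

/-- `G − A` is a tree: connected with `|E \ A| = |V| − 1`. -/
def isTreeAfter {V E : Type*} [Fintype V] [Fintype E] [DecidableEq E] (src tgt : E → V)
    (A : Finset E) : Prop :=
  (multiGraph src tgt {e | e ∉ A}).Connected ∧
    (Finset.univ.filter (fun e => e ∉ A)).card = Fintype.card V - 1

/-- Magnetic spectral gaps set `[0, 2ρ_∞] \ ⋃_α σ(Δ_α)`. -/
noncomputable def msSet {V E : Type*} [Fintype V] [Fintype E] [DecidableEq V] [Nonempty V]
    (src tgt : E → V) (m : V → ℝ) (mE : E → ℝ) : Set ℝ :=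
  Set.Icc 0 (2 * Finset.univ.sup' Finset.univ_nonempty (rho src tgt m mE)) \
    ⋃ (α : E → ℝ), realSpec (dml src tgt m mE α)


/-- Diagonalised quadratic form of a Hermitian matrix. -/
lemma herm_diag {ι : Type*} [Fintype ι] [DecidableEq ι] {A : Matrix ι ι ℂ} (hA : A.IsHermitian) :
    ∃ U : Matrix ι ι ℂ, (∀ f : ι → ℂ, (star f ⬝ᵥ (A *ᵥ f)).re
        = ∑ i, hA.eigenvalues i * Complex.normSq ((U *ᵥ f) i)) ∧
      (∀ f : ι → ℂ, ∑ i, Complex.normSq (f i) = ∑ i, Complex.normSq ((U *ᵥ f) i)) := by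
  have hU := hA.eigenvectorUnitary.2
  set W : Matrix ι ι ℂ := (hA.eigenvectorUnitary : Matrix ι ι ℂ) with hW
  have hWW : W * star W = 1 := (Matrix.mem_unitaryGroup_iff).1 hU
  have hs : A = W * diagonal (RCLike.ofReal ∘ hA.eigenvalues) * star W := by
    conv_lhs => rw [hA.spectral_theorem]
    rw [Unitary.conjStarAlgAut_apply]
  have key : ∀ (f : ι → ℂ) (D : Matrix ι ι ℂ), star f ⬝ᵥ ((W * D * star W) *ᵥ f)
      = star (star W *ᵥ f) ⬝ᵥ (D *ᵥ (star W *ᵥ f)) := by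
    intro f D
    rw [star_mulVec, ← dotProduct_mulVec, mulVec_mulVec, mulVec_mulVec]
    simp [star_eq_conjTranspose, mul_assoc]
  refine ⟨star W, fun f => ?_, fun f => ?_⟩
  · conv_lhs => rw [hs]
    rw [key]
    simp only [dotProduct, mulVec_diagonal, Pi.star_apply, Complex.re_sum]
    refine Finset.sum_congr rfl fun i _ => ?_
    simp [Complex.normSq_apply]
    ring
  · have := key f 1
    rw [mul_one, hWW] at this
    have h2 := congrArg Complex.re this
    simp only [one_mulVec, dotProduct, Pi.star_apply, Complex.re_sum] at h2
    convert h2 using 2 with i _ i _ <;> simp [Complex.normSq_apply]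

/-- Two Hermitian forms, one below the other along an isometric embedding of coordinates. -/
lemma count_ineq {ι κ : Type*} [Fintype ι] [DecidableEq ι] [Fintype κ] [DecidableEq κ]
    {A : Matrix ι ι ℂ} {B : Matrix κ κ ℂ} (hA : A.IsHermitian) (hB : B.IsHermitian)
    (J : (κ → ℂ) →ₗ[ℂ] (ι → ℂ))
    (hJ : ∀ f, ∑ i, Complex.normSq (J f i) = ∑ k, Complex.normSq (f k))
    (hAB : ∀ f : κ → ℂ, (star (J f) ⬝ᵥ (A *ᵥ (J f))).re ≤ (star f ⬝ᵥ (B *ᵥ f)).re)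
    (P Q : ℝ → Prop) [DecidablePred P] [DecidablePred Q] (x : ℝ)
    (hPQ : ((∀ y, P y → x ≤ y) ∧ (∀ y, Q y → y < x)) ∨ ((∀ y, P y → x < y) ∧ (∀ y, Q y → y ≤ x))) :
    Fintype.card κ ≤ (Finset.univ.filter (fun i => ¬ P (hA.eigenvalues i))).card
      + (Finset.univ.filter (fun k => ¬ Q (hB.eigenvalues k))).card := by
  by_contra hlt
  push Not at hlt
  obtain ⟨U, hU1, hU2⟩ := herm_diag hA
  obtain ⟨W, hW1, hW2⟩ := herm_diag hB
  let S := {i // ¬ P (hA.eigenvalues i)}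
  let T := {k // ¬ Q (hB.eigenvalues k)}
  let L : (κ → ℂ) →ₗ[ℂ] ((S → ℂ) × (T → ℂ)) :=
    LinearMap.prod ((LinearMap.funLeft ℂ ℂ (Subtype.val : S → ι)) ∘ₗ (Matrix.mulVecLin U) ∘ₗ J)
      ((LinearMap.funLeft ℂ ℂ (Subtype.val : T → κ)) ∘ₗ (Matrix.mulVecLin W))
  have hker : LinearMap.ker L ≠ ⊥ := by
    apply LinearMap.ker_ne_bot_of_finrank_lt
    simp only [Module.finrank_prod, Module.finrank_fintype_fun_eq_card]
    rw [Fintype.card_subtype, Fintype.card_subtype]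
    exact hlt
  obtain ⟨f, hf, hf0⟩ := Submodule.exists_mem_ne_zero_of_ne_bot hker
  have hf' : L f = 0 := hf
  have h1 : ∀ i, ¬ P (hA.eigenvalues i) → (U *ᵥ (J f)) i = 0 := fun i hi =>
    congrFun (congrArg Prod.fst hf') ⟨i, hi⟩
  have h2 : ∀ k, ¬ Q (hB.eigenvalues k) → (W *ᵥ f) k = 0 := fun k hk =>
    congrFun (congrArg Prod.snd hf') ⟨k, hk⟩
  have hpos : 0 < ∑ k, Complex.normSq (f k) := by
    obtain ⟨k, hk⟩ := Function.ne_iff.1 hf0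
    exact Finset.sum_pos' (fun _ _ => Complex.normSq_nonneg _)
      ⟨k, Finset.mem_univ _, Complex.normSq_pos.2 hk⟩
  have hq := hAB f
  rw [hU1, hW1] at hq
  have eA : ∑ i, Complex.normSq ((U *ᵥ (J f)) i) = ∑ k, Complex.normSq (f k) := by
    rw [← hU2, hJ]
  have eB : ∑ i, Complex.normSq ((W *ᵥ f) i) = ∑ k, Complex.normSq (f k) := (hW2 f).symm
  have exA : ∃ i, 0 < Complex.normSq ((U *ᵥ (J f)) i) := by
    by_contra h
    push Not at h
    have := Finset.sum_nonpos (fun i (_ : i ∈ Finset.univ) => h i)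
    linarith
  have exB : ∃ i, 0 < Complex.normSq ((W *ᵥ f) i) := by
    by_contra h
    push Not at h
    have := Finset.sum_nonpos (fun i (_ : i ∈ Finset.univ) => h i)
    linarith
  have leA : (∀ y, P y → x ≤ y) → x * ∑ k, Complex.normSq (f k) ≤
      ∑ i, hA.eigenvalues i * Complex.normSq ((U *ᵥ (J f)) i) := by
    intro h
    rw [← eA, Finset.mul_sum]
    refine Finset.sum_le_sum fun i _ => ?_
    by_cases hi : P (hA.eigenvalues i)
    · exact mul_le_mul_of_nonneg_right (h _ hi) (Complex.normSq_nonneg _)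
    · simp [h1 i hi]
  have leB : (∀ y, Q y → y ≤ x) → 
      ∑ i, hB.eigenvalues i * Complex.normSq ((W *ᵥ f) i) ≤ x * ∑ k, Complex.normSq (f k) := by
    intro h
    rw [← eB, Finset.mul_sum]
    refine Finset.sum_le_sum fun i _ => ?_
    by_cases hi : Q (hB.eigenvalues i)
    · exact mul_le_mul_of_nonneg_right (h _ hi) (Complex.normSq_nonneg _)
    · simp [h2 i hi]
  rcases hPQ with ⟨hP, hQ⟩ | ⟨hP, hQ⟩
  · have : ∑ i, hB.eigenvalues i * Complex.normSq ((W *ᵥ f) i)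
        < x * ∑ k, Complex.normSq (f k) := by
      rw [← eB, Finset.mul_sum]
      obtain ⟨j, hj⟩ := exB
      refine Finset.sum_lt_sum (fun i _ => ?_) ⟨j, Finset.mem_univ _, ?_⟩
      · by_cases hi : Q (hB.eigenvalues i)
        · exact mul_le_mul_of_nonneg_right (hQ _ hi).le (Complex.normSq_nonneg _)
        · simp [h2 i hi]
      · by_cases hi : Q (hB.eigenvalues j)
        · exact mul_lt_mul_of_pos_right (hQ _ hi) hj
        · simp [h2 j hi] at hj
    have := leA hP
    linarith
  · have : x * ∑ k, Complex.normSq (f k) <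
        ∑ i, hA.eigenvalues i * Complex.normSq ((U *ᵥ (J f)) i) := by
      rw [← eA, Finset.mul_sum]
      obtain ⟨j, hj⟩ := exA
      refine Finset.sum_lt_sum (fun i _ => ?_) ⟨j, Finset.mem_univ _, ?_⟩
      · by_cases hi : P (hA.eigenvalues i)
        · exact mul_le_mul_of_nonneg_right (hP _ hi).le (Complex.normSq_nonneg _)
        · simp [h1 i hi]
      · by_cases hi : P (hA.eigenvalues j)
        · exact mul_lt_mul_of_pos_right (hP _ hi) hj
        · simp [h1 j hi] at hj
    have := leB hQ
    linarith

/-- Eigenvalues bounded below / above by bounds of the quadratic form. -/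
lemma eig_bounds {ι : Type*} [Fintype ι] [DecidableEq ι]
    {A : Matrix ι ι ℂ} (hA : A.IsHermitian) (R : ℝ)
    (h0 : ∀ f : ι → ℂ, 0 ≤ (star f ⬝ᵥ (A *ᵥ f)).re)
    (hR : ∀ f : ι → ℂ, (star f ⬝ᵥ (A *ᵥ f)).re ≤ R * ∑ i, Complex.normSq (f i)) (i : ι) :
    0 ≤ hA.eigenvalues i ∧ hA.eigenvalues i ≤ R := by
  have h1 := hA.eigenvalues_eq i
  have h2 : ∑ j, Complex.normSq ((hA.eigenvectorBasis i : EuclideanSpace ℂ ι) j) = 1 := by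
    have := hA.eigenvectorBasis.orthonormal.1 i
    have h3 : ‖hA.eigenvectorBasis i‖ ^ 2 = 1 := by rw [this]; norm_num
    rw [EuclideanSpace.norm_sq_eq] at h3
    simpa [Complex.normSq_eq_norm_sq] using h3
  have a := h0 (hA.eigenvectorBasis i)
  have b := hR (hA.eigenvectorBasis i)
  rw [h2] at b
  simp only [RCLike.re_to_complex] at h1
  rw [h1]
  constructor
  · exact a
  · simpa using b

lemma integral_step (R a : ℝ) (h0 : 0 ≤ a) (hR : a ≤ R) :
    ∫ x in Set.Ioc 0 R, (if a < x then (1:ℝ) else 0) = R - a := by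
  have : (fun x : ℝ => if a < x then (1:ℝ) else 0) = Set.indicator (Set.Ioi a) (fun _ => 1) := by
    ext x; simp [Set.indicator]
  rw [this, MeasureTheory.setIntegral_indicator measurableSet_Ioi]
  have : Set.Ioc 0 R ∩ Set.Ioi a = Set.Ioc a R := by
    ext x; simp only [Set.mem_inter_iff, Set.mem_Ioc, Set.mem_Ioi]
    constructor
    · rintro ⟨⟨_, h⟩, h'⟩; exact ⟨h', h⟩
    · rintro ⟨h', h⟩; exact ⟨⟨by linarith, h⟩, h'⟩
  rw [this]
  simp [hR]

lemma integral_step' (R a : ℝ) (h0 : 0 ≤ a) (hR : a ≤ R) :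
    ∫ x in Set.Ioc 0 R, (if a ≤ x then (1:ℝ) else 0) = R - a := by
  rw [← integral_step R a h0 hR]
  apply MeasureTheory.integral_congr_ae
  apply MeasureTheory.ae_restrict_of_ae
  have : ∀ᵐ x : ℝ, x ≠ a := by
    simp [MeasureTheory.ae_iff]
  filter_upwards [this] with x hx
  have : a ≤ x ↔ a < x := ⟨fun h => lt_of_le_of_ne h hx.symm, le_of_lt⟩
  simp [this]

lemma step_integrable (R a : ℝ) :
    MeasureTheory.IntegrableOn (fun x : ℝ => if a < x then (1:ℝ) else 0) (Set.Ioc 0 R) := by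
  have : (fun x : ℝ => if a < x then (1:ℝ) else 0) = Set.indicator (Set.Ioi a) (fun _ => 1) := by
    ext x; simp [Set.indicator]
  rw [this]
  exact (MeasureTheory.integrableOn_const (by simp)).indicator measurableSet_Ioi

lemma step_integrable' (R a : ℝ) :
    MeasureTheory.IntegrableOn (fun x : ℝ => if a ≤ x then (1:ℝ) else 0) (Set.Ioc 0 R) := by
  have : (fun x : ℝ => if a ≤ x then (1:ℝ) else 0) = Set.indicator (Set.Ici a) (fun _ => 1) := by
    ext x; simp [Set.indicator]
  rw [this]
  exact (MeasureTheory.integrableOn_const (by simp)).indicator measurableSet_Ici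

/-- If the bands cover `[0, R]`, then the trace of the lower bound is at most the trace
of the compression. -/
lemma trace_of_cover {ι κ : Type*} [Fintype ι] [DecidableEq ι] [Fintype κ] [DecidableEq κ]
    {L : Matrix ι ι ℂ} {K : Matrix κ κ ℂ} (hL : L.IsHermitian) (hK : K.IsHermitian)
    (J : (κ → ℂ) →ₗ[ℂ] (ι → ℂ))
    (hJ : ∀ f, ∑ i, Complex.normSq (J f i) = ∑ k, Complex.normSq (f k))
    (hcard : Fintype.card κ + 1 = Fintype.card ι)
    (R : ℝ) (hR : 0 ≤ R)
    (bL : ∀ i, 0 ≤ hL.eigenvalues i ∧ hL.eigenvalues i ≤ R)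
    (bK : ∀ i, 0 ≤ hK.eigenvalues i ∧ hK.eigenvalues i ≤ R)
    (hcov : ∀ x ∈ Set.Icc 0 R, ∃ (H : Matrix ι ι ℂ), H.IsHermitian ∧ (x : ℂ) ∈ spectrum ℂ H ∧
      (∀ f : ι → ℂ, (star f ⬝ᵥ (L *ᵥ f)).re ≤ (star f ⬝ᵥ (H *ᵥ f)).re) ∧
      (∀ f : κ → ℂ, (star (J f) ⬝ᵥ (H *ᵥ (J f))).re ≤ (star f ⬝ᵥ (K *ᵥ f)).re)) :
    L.trace.re ≤ K.trace.re := by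
  classical
  have hcount : ∀ x ∈ Set.Icc 0 R, (1:ℝ) + ∑ k, (if hK.eigenvalues k < x then (1:ℝ) else 0)
      ≤ ∑ i, (if hL.eigenvalues i ≤ x then (1:ℝ) else 0) := by
    intro x hx
    obtain ⟨H, hH, hxH, h1, h2⟩ := hcov x hx
    have hex : ∃ i, hH.eigenvalues i = x := by
      rw [hH.spectrum_eq_image_range] at hxH
      obtain ⟨_, ⟨i, rfl⟩, hi⟩ := hxH
      exact ⟨i, Complex.ofReal_injective hi⟩
    have c1 := count_ineq hL hH LinearMap.id (fun f => rfl) h1 (fun y => x < y) (fun y => y ≤ x) x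
      (Or.inr ⟨fun _ h => h, fun _ h => h⟩)
    have c2 := count_ineq hH hK J hJ h2 (fun y => x ≤ y) (fun y => y < x) x
      (Or.inl ⟨fun _ h => h, fun _ h => h⟩)
    simp only [not_lt, not_le] at c1 c2
    have s1 := Finset.card_filter_add_card_filter_not (s := (Finset.univ : Finset κ)) (fun k => hK.eigenvalues k < x)
    have s2 := Finset.card_filter_add_card_filter_not (s := (Finset.univ : Finset ι)) (fun k => hH.eigenvalues k ≤ x)
    simp only [not_lt, not_le, Finset.card_univ] at s1 s2
    have s3 : (Finset.univ.filter (fun i => hH.eigenvalues i < x)).card + 1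
        ≤ (Finset.univ.filter (fun i => hH.eigenvalues i ≤ x)).card := by
      apply Nat.succ_le_of_lt
      apply Finset.card_lt_card
      rw [Finset.ssubset_iff_of_subset]
      · obtain ⟨i, hi⟩ := hex
        exact ⟨i, by simp [hi], by simp [hi]⟩
      · intro i; simp only [Finset.mem_filter, Finset.mem_univ, true_and]; exact le_of_lt
    have : 1 + (Finset.univ.filter (fun k => hK.eigenvalues k < x)).card
      ≤ (Finset.univ.filter (fun i => hL.eigenvalues i ≤ x)).card := by omega
    rw [Finset.sum_boole, Finset.sum_boole]
    exact_mod_cast this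
  have hint : ∫ x in Set.Ioc 0 R, ((1:ℝ) + ∑ k, (if hK.eigenvalues k < x then (1:ℝ) else 0))
      ≤ ∫ x in Set.Ioc 0 R, ∑ i, (if hL.eigenvalues i ≤ x then (1:ℝ) else 0) := by
    apply MeasureTheory.setIntegral_mono_on
    · exact (MeasureTheory.integrableOn_const (by simp)).add
        (MeasureTheory.integrable_finsetSum _ fun k _ => step_integrable R _)
    · exact MeasureTheory.integrable_finsetSum _ fun k _ => step_integrable' R _
    · exact measurableSet_Ioc
    · intro x hx; exact hcount x ⟨hx.1.le, hx.2⟩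
  have hc1 : MeasureTheory.IntegrableOn (fun _ : ℝ => (1:ℝ)) (Set.Ioc 0 R) :=
    MeasureTheory.integrableOn_const (by simp)
  rw [MeasureTheory.integral_add (by exact hc1)
      (MeasureTheory.integrable_finsetSum _ fun k _ => step_integrable R _),
    MeasureTheory.integral_finsetSum _ (fun k _ => step_integrable R _),
    MeasureTheory.integral_finsetSum _ (fun k _ => step_integrable' R _)] at hint
  simp only [integral_step R _ (bK _).1 (bK _).2, integral_step' R _ (bL _).1 (bL _).2] at hint
  rw [hL.trace_eq_sum_eigenvalues, hK.trace_eq_sum_eigenvalues]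
  simp only [MeasureTheory.integral_const, Finset.sum_sub_distrib, Finset.sum_const,
    Finset.card_univ, nsmul_eq_mul] at hint
  have hc : (Fintype.card ι : ℝ) = Fintype.card κ + 1 := by exact_mod_cast hcard.symm
  rw [hc] at hint
  simp [MeasureTheory.Measure.real, hR] at hint
  simp
  nlinarith

/-- The edge covector: `∑ v, edgeVec e v * f v = f(t)/√m(t) - z f(s)/√m(s)`. -/
noncomputable def edgeVec {V E : Type*} [DecidableEq V] (src tgt : E → V)
    (m : V → ℝ) (α : E → ℝ) (e : E) (v : V) : ℂ :=
  ((1 / Real.sqrt (m v) : ℝ) : ℂ) *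
    ((if tgt e = v then 1 else 0) - (if src e = v then Complex.exp ((α e : ℂ) * Complex.I) else 0))

lemma exp_conj_mul (a : ℝ) : starRingEnd ℂ (Complex.exp ((a : ℂ) * Complex.I)) *
    Complex.exp ((a : ℂ) * Complex.I) = 1 := by
  rw [← Complex.exp_conj, ← Complex.exp_add]
  simp

lemma edge_alg (p q r s : Prop) [Decidable p] [Decidable q] [Decidable r] [Decidable s] (z : ℂ)
    (hz : starRingEnd ℂ z * z = 1) :
    ((if p ∧ q then (1 : ℂ) else 0) + (if r ∧ s then 1 else 0)) -
      ((if q ∧ r then z else 0) + (if s ∧ p then starRingEnd ℂ z else 0)) =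
    starRingEnd ℂ ((if r then 1 else 0) - (if p then z else 0)) *
      ((if s then 1 else 0) - (if q then z else 0)) := by
  by_cases p <;> by_cases q <;> by_cases r <;> by_cases s <;> simp [*] <;>
    linear_combination -hz

lemma dml_apply {V E : Type*} [Fintype E] [DecidableEq V] (src tgt : E → V)
    (m : V → ℝ) (hm : ∀ v, 0 < m v) (mE : E → ℝ) (α : E → ℝ) (u v : V) :
    dml src tgt m mE α u v = ∑ e, (mE e : ℂ) *
      (starRingEnd ℂ (edgeVec src tgt m α e u) * edgeVec src tgt m α e v) := by
  unfold dml dmlPhase rho edgeSumAt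
  have hsq : ∀ v, (Real.sqrt (m v) : ℂ) ≠ 0 := fun v => by
    exact_mod_cast (Real.sqrt_pos.2 (hm v)).ne'
  have hd : (if u = v then (((∑ e : E, ((if src e = u then mE e else 0) +
      (if tgt e = u then mE e else 0))) / m u : ℝ) : ℂ) else 0) =
      ∑ e, (mE e : ℂ) * (((1 / (Real.sqrt (m u) * Real.sqrt (m v)) : ℝ) : ℂ) *
        ((if src e = u ∧ src e = v then 1 else 0) + (if tgt e = u ∧ tgt e = v then 1 else 0))) := by
    split_ifs with h
    · subst h
      rw [Real.mul_self_sqrt (hm u).le]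
      push_cast
      rw [Finset.sum_div]
      refine Finset.sum_congr rfl fun e _ => ?_
      simp only [and_self]
      split_ifs <;> simp <;> ring
    · symm
      apply Finset.sum_eq_zero
      intro e _
      have h1 : ¬ (src e = u ∧ src e = v) := fun h' => h (h'.1.symm.trans h'.2)
      have h2 : ¬ (tgt e = u ∧ tgt e = v) := fun h' => h (h'.1.symm.trans h'.2)
      simp [h1, h2]
  rw [hd, Finset.mul_sum, ← Finset.sum_sub_distrib]
  refine Finset.sum_congr rfl fun e _ => ?_
  unfold edgeVec
  have hz := exp_conj_mul (α e)
  set z := Complex.exp ((α e : ℂ) * Complex.I)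
  have := edge_alg (src e = u) (src e = v) (tgt e = u) (tgt e = v) z hz
  rw [map_mul, Complex.conj_ofReal]
  push_cast
  linear_combination (mE e : ℂ) * (1 / (Real.sqrt (m u) * Real.sqrt (m v)) : ℂ) * this

lemma dml_herm {V E : Type*} [Fintype V] [Fintype E] [DecidableEq V] (src tgt : E → V)
    (m : V → ℝ) (hm : ∀ v, 0 < m v) (mE : E → ℝ) (α : E → ℝ) :
    (dml src tgt m mE α).IsHermitian := by
  ext u v
  rw [conjTranspose_apply, dml_apply _ _ _ hm, dml_apply _ _ _ hm, star_sum]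
  refine Finset.sum_congr rfl fun e _ => ?_
  simp only [star_mul', RCLike.star_def, Complex.conj_conj, Complex.conj_ofReal]
  ring

lemma edgeVec_sum {V E : Type*} [Fintype V] [DecidableEq V] (src tgt : E → V)
    (m : V → ℝ) (α : E → ℝ) (e : E) (f : V → ℂ) :
    ∑ v, edgeVec src tgt m α e v * f v = ((1 / Real.sqrt (m (tgt e)) : ℝ) : ℂ) * f (tgt e) -
      Complex.exp ((α e : ℂ) * Complex.I) * (((1 / Real.sqrt (m (src e)) : ℝ) : ℂ) * f (src e)) := by
  unfold edgeVec
  simp only [mul_sub, sub_mul, Finset.sum_sub_distrib, mul_ite, ite_mul, mul_one, mul_zero, zero_mul,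
    Finset.sum_ite_eq, Finset.mem_univ, if_true]
  ring

lemma dml_form {V E : Type*} [Fintype V] [Fintype E] [DecidableEq V] (src tgt : E → V)
    (m : V → ℝ) (hm : ∀ v, 0 < m v) (mE : E → ℝ) (α : E → ℝ) (f : V → ℂ) :
    (star f ⬝ᵥ (dml src tgt m mE α *ᵥ f)).re = ∑ e, mE e *
      Complex.normSq (((1 / Real.sqrt (m (tgt e)) : ℝ) : ℂ) * f (tgt e) -
      Complex.exp ((α e : ℂ) * Complex.I) * (((1 / Real.sqrt (m (src e)) : ℝ) : ℂ) * f (src e))) := by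
  have : star f ⬝ᵥ (dml src tgt m mE α *ᵥ f) = ∑ e, (mE e : ℂ) *
      (starRingEnd ℂ (∑ v, edgeVec src tgt m α e v * f v) * ∑ v, edgeVec src tgt m α e v * f v) := by
    simp only [dotProduct, mulVec, dml_apply _ _ _ hm, map_sum, Finset.mul_sum, Finset.sum_mul,
      Pi.star_apply]
    rw [Finset.sum_comm' (t' := Finset.univ) (s' := fun _ => Finset.univ) (by simp)]
    conv_lhs => enter [2, y]; rw [Finset.sum_comm]
    rw [Finset.sum_comm]
    refine Finset.sum_congr rfl fun e _ => ?_
    refine Finset.sum_congr rfl fun u _ => ?_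
    refine Finset.sum_congr rfl fun v _ => ?_
    simp
    ring
  rw [this, Complex.re_sum]
  refine Finset.sum_congr rfl fun e _ => ?_
  rw [edgeVec_sum, Complex.re_ofReal_mul, mul_comm (starRingEnd ℂ _), Complex.mul_conj,
    Complex.ofReal_re]

lemma normSq_exp_mul (a : ℝ) (z : ℂ) :
    Complex.normSq (Complex.exp ((a : ℂ) * Complex.I) * z) = Complex.normSq z := by
  rw [Complex.normSq_mul, Complex.normSq_eq_norm_sq (Complex.exp _), Complex.norm_exp_ofReal_mul_I]
  simp

lemma normSq_sub_le (a b : ℂ) :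
    Complex.normSq (a - b) ≤ 2 * (Complex.normSq a + Complex.normSq b) := by
  simp only [Complex.normSq_apply, Complex.sub_re, Complex.sub_im]
  nlinarith [sq_nonneg (a.re + b.re), sq_nonneg (a.im + b.im)]

lemma dml_form_nonneg {V E : Type*} [Fintype V] [Fintype E] [DecidableEq V] (src tgt : E → V)
    (m : V → ℝ) (hm : ∀ v, 0 < m v) (mE : E → ℝ) (hE : ∀ e, 0 ≤ mE e) (α : E → ℝ) (f : V → ℂ) :
    0 ≤ (star f ⬝ᵥ (dml src tgt m mE α *ᵥ f)).re := by
  rw [dml_form _ _ _ hm]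
  exact Finset.sum_nonneg fun e _ => mul_nonneg (hE e) (Complex.normSq_nonneg _)

lemma dml_form_le {V E : Type*} [Fintype V] [Fintype E] [DecidableEq V] [Nonempty V]
    (src tgt : E → V)
    (m : V → ℝ) (hm : ∀ v, 0 < m v) (mE : E → ℝ) (hE : ∀ e, 0 ≤ mE e) (α : E → ℝ) (f : V → ℂ) :
    (star f ⬝ᵥ (dml src tgt m mE α *ᵥ f)).re ≤
      (2 * Finset.univ.sup' Finset.univ_nonempty (rho src tgt m mE)) *
        ∑ v, Complex.normSq (f v) := by
  rw [dml_form _ _ _ hm]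
  have hn : ∀ v, Complex.normSq ((1 / Real.sqrt (m v) : ℝ) : ℂ) = 1 / m v := by
    intro v
    rw [Complex.normSq_ofReal, ← sq, div_pow, Real.sq_sqrt (hm v).le]
    norm_num
  calc _ ≤ ∑ e, mE e * (2 * (Complex.normSq (f (tgt e)) / m (tgt e) +
          Complex.normSq (f (src e)) / m (src e))) := by
        refine Finset.sum_le_sum fun e _ => mul_le_mul_of_nonneg_left ?_ (hE e)
        refine (normSq_sub_le _ _).trans (le_of_eq ?_)
        rw [normSq_exp_mul, Complex.normSq_mul, Complex.normSq_mul, hn, hn]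
        ring
    _ = ∑ v, 2 * (rho src tgt m mE v * Complex.normSq (f v)) := by
        unfold rho edgeSumAt
        simp only [Finset.sum_div, Finset.sum_mul, Finset.mul_sum]
        rw [Finset.sum_comm]
        refine Finset.sum_congr rfl fun e _ => ?_
        simp only [add_div, add_mul, mul_add, Finset.sum_add_distrib, ite_div, ite_mul, zero_div,
          zero_mul, mul_ite, mul_zero, Finset.sum_ite_eq, Finset.mem_univ, if_true]
        ring
    _ ≤ _ := by
        rw [Finset.mul_sum]
        refine Finset.sum_le_sum fun v _ => ?_
        have := Finset.le_sup' (rho src tgt m mE) (Finset.mem_univ v)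
        nlinarith [mul_le_mul_of_nonneg_right this (Complex.normSq_nonneg (f v))]

lemma dml_gauge {V E : Type*} [Fintype V] [Fintype E] [DecidableEq V] (src tgt : E → V)
    (m : V → ℝ) (mE : E → ℝ) (α β : E → ℝ) (φ : V → ℝ)
    (h : ∀ e, β e = α e + (φ (tgt e) - φ (src e))) :
    realSpec (dml src tgt m mE β) = realSpec (dml src tgt m mE α) := by
  let U : Matrix V V ℂ := diagonal fun v => Complex.exp ((φ v : ℂ) * Complex.I)
  let U' : Matrix V V ℂ := diagonal fun v => Complex.exp (-((φ v : ℂ) * Complex.I))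
  have h1 : U * U' = 1 := by
    simp only [U, U', diagonal_mul_diagonal, ← Complex.exp_add]
    simp
  have h2 : U' * U = 1 := by
    simp only [U, U', diagonal_mul_diagonal, ← Complex.exp_add]
    simp
  have key : dml src tgt m mE β = U * dml src tgt m mE α * U' := by
    ext u v
    simp only [U, U', diagonal_mul, mul_diagonal]
    unfold dml dmlPhase
    have hd : (if u = v then ((rho src tgt m mE u : ℝ) : ℂ) else 0) =
        Complex.exp ((φ u : ℂ) * Complex.I) *
          (if u = v then ((rho src tgt m mE u : ℝ) : ℂ) else 0) *
          Complex.exp (-((φ v : ℂ) * Complex.I)) := by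
      split_ifs with huv
      · subst huv
        rw [mul_right_comm, ← Complex.exp_add]; simp
      · simp
    rw [mul_sub, sub_mul, ← hd]
    congr 1
    simp only [Finset.mul_sum, Finset.sum_mul]
    refine Finset.sum_congr rfl fun e _ => ?_
    have t1 : (if src e = v ∧ tgt e = u then Complex.exp ((β e : ℂ) * Complex.I) else 0) =
      Complex.exp ((φ u : ℂ) * Complex.I) * (if src e = v ∧ tgt e = u then
        Complex.exp ((α e : ℂ) * Complex.I) else 0) * Complex.exp (-((φ v : ℂ) * Complex.I)) := by
      split_ifs with hh
      · rw [h e, hh.1, hh.2, ← Complex.exp_add, ← Complex.exp_add]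
        congr 1; push_cast; ring
      · simp
    have t2 : (if tgt e = v ∧ src e = u then starRingEnd ℂ (Complex.exp ((β e : ℂ) * Complex.I)) else 0) =
      Complex.exp ((φ u : ℂ) * Complex.I) * (if tgt e = v ∧ src e = u then
        starRingEnd ℂ (Complex.exp ((α e : ℂ) * Complex.I)) else 0) *
          Complex.exp (-((φ v : ℂ) * Complex.I)) := by
      split_ifs with hh
      · rw [h e, hh.1, hh.2, ← Complex.exp_conj, ← Complex.exp_conj, ← Complex.exp_add,
          ← Complex.exp_add]
        congr 1
        simp
        ring
      · simp
    rw [t1, t2]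
    ring
  let u : (Matrix V V ℂ)ˣ := ⟨U, U', h1, h2⟩
  have : dml src tgt m mE β = (u : Matrix V V ℂ) * dml src tgt m mE α * ((u⁻¹ : (Matrix V V ℂ)ˣ) : Matrix V V ℂ) := key
  unfold realSpec
  rw [this, spectrum.units_conjugate]

lemma dml_diag {V E : Type*} [Fintype E] [DecidableEq V] (src tgt : E → V)
    (m : V → ℝ) (hm : ∀ v, 0 < m v) (mE : E → ℝ) (α : E → ℝ) (u : V) :
    (dml src tgt m mE α u u).re = ∑ e, mE e * Complex.normSq (edgeVec src tgt m α e u) := by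
  rw [dml_apply _ _ _ hm, Complex.re_sum]
  refine Finset.sum_congr rfl fun e _ => ?_
  rw [Complex.re_ofReal_mul, mul_comm (starRingEnd ℂ _), Complex.mul_conj, Complex.ofReal_re]

/-- Extension by zero. -/
noncomputable def extZero {V : Type*} [DecidableEq V] (u : V) :
    ({w : V // w ≠ u} → ℂ) →ₗ[ℂ] (V → ℂ) where
  toFun f v := if h : v = u then 0 else f ⟨v, h⟩
  map_add' f g := by ext v; by_cases h : v = u <;> simp [h]
  map_smul' c f := by ext v; by_cases h : v = u <;> simp [h]

lemma extZero_self {V : Type*} [DecidableEq V] (u : V) (f : {w : V // w ≠ u} → ℂ) :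
    extZero u f u = 0 := by simp [extZero]

lemma extZero_coe {V : Type*} [DecidableEq V] (u : V) (f : {w : V // w ≠ u} → ℂ)
    (w : {w : V // w ≠ u}) : extZero u f w = f w := by
  have := w.2
  simp [extZero, this]

lemma sum_split {V M : Type*} [Fintype V] [DecidableEq V] [AddCommMonoid M] (u : V) (F : V → M) :
    ∑ v, F v = F u + ∑ w : {w : V // w ≠ u}, F w := by
  rw [← Finset.add_sum_erase _ _ (Finset.mem_univ u)]
  congr 1
  rw [← Finset.sum_subtype]
  intro x; simp

lemma gap_exists {V E : Type*} [Fintype V] [Fintype E] [DecidableEq V] [DecidableEq E]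
    [Nonempty V] (src tgt : E → V) (m : V → ℝ) (hm : ∀ v, 0 < m v) (mE : E → ℝ)
    (hE : ∀ e, mE e = 1) (e0 : E) (u : V) (hu : src e0 = u ∨ tgt e0 = u)
    (hg : ∀ α : E → ℝ, ∃ (s : ℝ) (φ : V → ℝ),
      ∀ e, α e = (if e = e0 then s else 0) + (φ (tgt e) - φ (src e)))
    (hN : ∑ v, Complex.normSq (edgeVec src tgt m 0 e0 v)
      < ∑ e, Complex.normSq (edgeVec src tgt m 0 e u)) :
    msSet src tgt m mE ≠ ∅ := by
  intro hms
  unfold msSet at hms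
  rw [Set.sdiff_eq_empty] at hms
  set R := 2 * Finset.univ.sup' Finset.univ_nonempty (rho src tgt m mE) with hRdef
  have hE0 : ∀ e, 0 ≤ mE e := fun e => by rw [hE]; norm_num
  have hR : 0 ≤ R := by
    obtain ⟨v⟩ := ‹Nonempty V›
    have h1 := Finset.le_sup' (rho src tgt m mE) (Finset.mem_univ v)
    have h2 : 0 ≤ rho src tgt m mE v := by
      unfold rho edgeSumAt
      refine div_nonneg (Finset.sum_nonneg fun e _ => ?_) (hm v).le
      rw [hE]
      split_ifs <;> norm_num
    linarith
  let mE' : E → ℝ := fun e => if e = e0 then 0 else mE e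
  have hE' : ∀ e, 0 ≤ mE' e := fun e => by
    simp only [mE']; split_ifs; exacts [le_rfl, hE0 e]
  let ph : ℝ → E → ℝ := fun s e => if e = e0 then s else 0
  let L := dml src tgt m mE' 0
  let M := dml src tgt m mE 0
  let K : Matrix {w : V // w ≠ u} {w : V // w ≠ u} ℂ := M.submatrix Subtype.val Subtype.val
  have hL : L.IsHermitian := dml_herm _ _ _ hm _ _
  have hM : M.IsHermitian := dml_herm _ _ _ hm _ _
  have hK : K.IsHermitian := hM.submatrix _
  have hJ : ∀ f : {w : V // w ≠ u} → ℂ,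
      ∑ v, Complex.normSq (extZero u f v) = ∑ k, Complex.normSq (f k) := by
    intro f
    rw [sum_split u]
    simp only [extZero_self, extZero_coe, map_zero, zero_add]
  have hKM : ∀ f : {w : V // w ≠ u} → ℂ,
      star f ⬝ᵥ (K *ᵥ f) = star (extZero u f) ⬝ᵥ (M *ᵥ extZero u f) := by
    intro f
    simp only [dotProduct, mulVec, Pi.star_apply]
    rw [sum_split u]
    simp only [extZero_self, extZero_coe, star_zero, zero_mul, zero_add]
    refine Finset.sum_congr rfl fun w _ => ?_
    rw [sum_split u]
    simp only [extZero_self, extZero_coe, mul_zero, zero_add]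
    rfl
  have hLH : ∀ s, ∀ f : V → ℂ, (star f ⬝ᵥ (L *ᵥ f)).re ≤
      (star f ⬝ᵥ (dml src tgt m mE (ph s) *ᵥ f)).re := by
    intro s f
    rw [dml_form _ _ _ hm, dml_form _ _ _ hm]
    refine Finset.sum_le_sum fun e _ => ?_
    by_cases h : e = e0
    · simp only [mE', h, if_true, zero_mul]
      exact mul_nonneg (hE0 _) (Complex.normSq_nonneg _)
    · simp [mE', ph, h]
  have hHK : ∀ s, ∀ f : {w : V // w ≠ u} → ℂ,
      (star (extZero u f) ⬝ᵥ (dml src tgt m mE (ph s) *ᵥ extZero u f)).re ≤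
      (star f ⬝ᵥ (K *ᵥ f)).re := by
    intro s f
    rw [hKM, dml_form _ _ _ hm, dml_form _ _ _ hm]
    refine le_of_eq (Finset.sum_congr rfl fun e _ => ?_)
    by_cases h : e = e0
    · subst h
      rcases hu with hu | hu
      · rw [hu, extZero_self]; simp
      · rw [hu, extZero_self]
        simp only [mul_zero, zero_sub, Complex.normSq_neg, normSq_exp_mul]
    · simp [ph, h]
  have bL := eig_bounds hL R (dml_form_nonneg _ _ _ hm _ hE' _)
    (fun f => (hLH 0 f).trans (dml_form_le _ _ _ hm _ hE0 _ f))
  have bK := eig_bounds hK R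
    (fun f => by rw [hKM]; exact dml_form_nonneg _ _ _ hm _ hE0 _ _)
    (fun f => by rw [hKM, ← hJ]; exact dml_form_le _ _ _ hm _ hE0 _ _)
  have hcard : Fintype.card {w : V // w ≠ u} + 1 = Fintype.card V := by
    have := sum_split u (fun _ : V => (1 : ℕ))
    simp only [Finset.sum_const, Finset.card_univ, smul_eq_mul, mul_one] at this
    omega
  have htr := trace_of_cover hL hK (extZero u) hJ hcard R hR bL bK (by
    intro x hx
    obtain ⟨α, hα⟩ := Set.mem_iUnion.1 (hms hx)
    obtain ⟨s, φ, hφ⟩ := hg α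
    rw [dml_gauge src tgt m mE (ph s) α φ hφ] at hα
    exact ⟨_, dml_herm _ _ _ hm _ _, hα, hLH s, hHK s⟩)
  have trL : L.trace.re = ∑ v, ∑ e, Complex.normSq (edgeVec src tgt m 0 e v)
      - ∑ v, Complex.normSq (edgeVec src tgt m 0 e0 v) := by
    simp only [Matrix.trace, Matrix.diag, Complex.re_sum]
    rw [← Finset.sum_sub_distrib]
    refine Finset.sum_congr rfl fun v _ => ?_
    rw [dml_diag _ _ _ hm, ← Finset.add_sum_erase _ _ (Finset.mem_univ e0),
      ← Finset.add_sum_erase (a := e0) _ (fun e => Complex.normSq (edgeVec src tgt m 0 e v)) (Finset.mem_univ e0)]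
    simp only [mE', if_true, zero_mul, zero_add, add_sub_cancel_left]
    refine Finset.sum_congr rfl fun e he => ?_
    rw [if_neg (Finset.ne_of_mem_erase he), hE, one_mul]
  have trK : K.trace.re = ∑ v, ∑ e, Complex.normSq (edgeVec src tgt m 0 e v)
      - ∑ e, Complex.normSq (edgeVec src tgt m 0 e u) := by
    rw [sum_split u (fun v => ∑ e, Complex.normSq (edgeVec src tgt m 0 e v)), add_sub_cancel_left]
    simp only [Matrix.trace, Matrix.diag, Complex.re_sum]
    refine Finset.sum_congr rfl fun v _ => ?_
    simp only [K, submatrix_apply, M]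
    rw [dml_diag _ _ _ hm]
    simp [hE]
  linarith

lemma edgeVec_normSq {V E : Type*} [DecidableEq V] (src tgt : E → V)
    (m : V → ℝ) (hm : ∀ v, 0 < m v) (e : E) (h : src e ≠ tgt e) (v : V) :
    Complex.normSq (edgeVec src tgt m 0 e v) =
      1 / m v * ((if src e = v then 1 else 0) + (if tgt e = v then 1 else 0)) := by
  unfold edgeVec
  rw [Complex.normSq_mul, Complex.normSq_ofReal, ← sq, div_pow, Real.sq_sqrt (hm v).le]
  by_cases h1 : src e = v <;> by_cases h2 : tgt e = v <;> simp [h1, h2]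
  exact absurd (h1.trans h2.symm) h

lemma edgeVec_loop {V E : Type*} [DecidableEq V] (src tgt : E → V)
    (m : V → ℝ) (e : E) (h : src e = tgt e) (v : V) :
    edgeVec src tgt m 0 e v = 0 := by
  unfold edgeVec
  simp [h]

/-- The trace inequality in terms of degrees. -/
lemma trace_ineq {V E : Type*} [Fintype V] [Fintype E] [DecidableEq V] [DecidableEq E]
    (src tgt : E → V) (m : V → ℝ) (hm : ∀ v, 0 < m v) 
    (hw : (∀ v, m v = (mdeg src tgt v : ℝ)) ∨ (∀ v, m v = 1))
    (e0 : E) (u : V) (hu : src e0 = u ∨ tgt e0 = u)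
    (hnl : ∀ e, e ≠ e0 → src e ≠ tgt e) (hd : 3 ≤ mdeg src tgt u)
    (hd1 : 2 ≤ mdeg src tgt (src e0)) (hd2 : 2 ≤ mdeg src tgt (tgt e0)) :
    ∑ v, Complex.normSq (edgeVec src tgt m 0 e0 v)
      < ∑ e, Complex.normSq (edgeVec src tgt m 0 e u) := by
  have hdeg : (mdeg src tgt u : ℝ) = ∑ e : E, ((if src e = u then (1:ℝ) else 0) +
      (if tgt e = u then 1 else 0)) := by
    unfold mdeg; push_cast; rfl
  rw [← Finset.add_sum_erase _ _ (Finset.mem_univ e0)] at hdeg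
  have hrest : ∑ e ∈ Finset.univ.erase e0, Complex.normSq (edgeVec src tgt m 0 e u) =
      1 / m u * ((mdeg src tgt u : ℝ) - ((if src e0 = u then (1:ℝ) else 0) +
      (if tgt e0 = u then 1 else 0))) := by
    rw [hdeg, add_sub_cancel_left, Finset.mul_sum]
    refine Finset.sum_congr rfl fun e he => ?_
    exact edgeVec_normSq _ _ _ hm _ (hnl e (Finset.ne_of_mem_erase he)) _
  rw [← Finset.add_sum_erase _ _ (Finset.mem_univ e0), hrest]
  have hd' : (3:ℝ) ≤ mdeg src tgt u := by exact_mod_cast hd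
  have hd1' : (2:ℝ) ≤ mdeg src tgt (src e0) := by exact_mod_cast hd1
  have hd2' : (2:ℝ) ≤ mdeg src tgt (tgt e0) := by exact_mod_cast hd2
  by_cases hl : src e0 = tgt e0
  · simp only [edgeVec_loop _ _ _ _ hl, map_zero, Finset.sum_const_zero, zero_add]
    have : 0 < 1 / m u := one_div_pos.2 (hm u)
    apply mul_pos this
    split_ifs <;> linarith
  · simp only [edgeVec_normSq _ _ _ hm _ hl]
    have hs : ∑ v, 1 / m v * ((if src e0 = v then (1:ℝ) else 0) + (if tgt e0 = v then 1 else 0)) =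
        1 / m (src e0) + 1 / m (tgt e0) := by
      simp [mul_add, Finset.sum_add_distrib]
    rw [hs]
    have hgen : ∀ v, 2 ≤ mdeg src tgt v → 1 / m v < 1 / m u * ((mdeg src tgt u : ℝ) - 1) := by
      intro v hv
      have hv' : (2:ℝ) ≤ mdeg src tgt v := by exact_mod_cast hv
      rcases hw with hw | hw
      · rw [hw, hw]
        have a : 1 / (mdeg src tgt v : ℝ) ≤ 1 / 2 := by
          apply one_div_le_one_div_of_le <;> linarith
        have b : 1 / (mdeg src tgt u : ℝ) ≤ 1 / 3 := by
          apply one_div_le_one_div_of_le <;> linarith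
        have c : 1 / (mdeg src tgt u : ℝ) * (mdeg src tgt u : ℝ) = 1 := by
          field_simp
        nlinarith
      · rw [hw, hw]; linarith
    rcases hu with hu | hu
    · have h2 : tgt e0 ≠ u := fun h => hl (hu.trans h.symm)
      have := hgen _ hd2
      simp only [hu, h2, if_true, if_false]
      linarith
    · have h2 : src e0 ≠ u := fun h => hl (h.trans hu.symm)
      have := hgen _ hd1
      simp only [hu, h2, if_true, if_false]
      linarith

lemma const_of_conn {V β : Type*} {G : SimpleGraph V} (hG : G.Connected) (F : V → β)
    (h : ∀ u v, G.Adj u v → F u = F v) (u v : V) : F u = F v := by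
  obtain ⟨p⟩ := hG.preconnected u v
  induction p with
  | nil => rfl
  | cons hadj _ ih => exact (h _ _ hadj).trans ih

lemma prop_of_conn {V : Type*} {G : SimpleGraph V} (hG : G.Connected) (P : V → Prop)
    (h : ∀ u v, G.Adj u v → P u → P v) (u : V) (hu : P u) (v : V) : P v := by
  have := const_of_conn hG P (fun a b hab => propext ⟨h a b hab, h b a hab.symm⟩) u v
  exact this ▸ hu

/-- Coboundary operator. -/
def cobd {V E : Type*} (src tgt : E → V) : (V → ℝ) →ₗ[ℝ] (E → ℝ) where
  toFun φ e := φ (tgt e) - φ (src e)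
  map_add' f g := by ext e; simp; ring
  map_smul' c f := by ext e; simp; ring

lemma flow_exists {V E : Type*} [Fintype V] [Fintype E] [Nonempty V]
    (src tgt : E → V) (ind : E → ℤ)
    (hconn : (multiGraph src tgt Set.univ).Connected)
    (hbetti : Fintype.card E = Fintype.card V)
    (hcovconn : (SimpleGraph.fromRel (fun x y : ℤ × V =>
        ∃ p : ℤ × E, x = (p.1, src p.2) ∧ y = (p.1 + ind p.2, tgt p.2))).Connected) :
    ∃ c : (E → ℝ) →ₗ[ℝ] ℝ, c (fun e => (ind e : ℝ)) = 1 ∧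
      ∀ α, c α = 0 ↔ ∃ φ : V → ℝ, ∀ e, α e = φ (tgt e) - φ (src e) := by
  classical
  have hnot : (fun e => (ind e : ℝ)) ∉ LinearMap.range (cobd src tgt) := by
    rintro ⟨φ, hφ⟩
    obtain ⟨v⟩ := ‹Nonempty V›
    have := const_of_conn hcovconn (fun x : ℤ × V => (x.1 : ℝ) - φ x.2) (by
      rintro x y ⟨_, ⟨p, rfl, rfl⟩ | ⟨p, rfl, rfl⟩⟩ <;>
      · have := congrFun hφ p.2
        simp only [cobd, LinearMap.coe_mk, AddHom.coe_mk] at this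
        push_cast
        linarith) (0, v) (1, v)
    simp at this
    linarith
  obtain ⟨f, hf1, hf2⟩ := Submodule.exists_le_ker_of_notMem hnot
  have hker : Module.finrank ℝ (LinearMap.ker (cobd src tgt)) ≤ 1 := by
    refine finrank_le_one (⟨fun _ => 1, ?_⟩ : LinearMap.ker (cobd src tgt)) ?_
    · rw [LinearMap.mem_ker]; ext e; simp [cobd]
    · rintro ⟨φ, hφ⟩
      obtain ⟨v0⟩ := ‹Nonempty V›
      refine ⟨φ v0, ?_⟩
      ext v
      simp only [SetLike.mk_smul_mk, Pi.smul_apply, smul_eq_mul, mul_one]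
      refine const_of_conn hconn φ ?_ v0 v
      rintro a b ⟨_, ⟨e, _, rfl, rfl⟩ | ⟨e, _, rfl, rfl⟩⟩ <;>
      · have := congrFun hφ e
        simp only [cobd, LinearMap.coe_mk, AddHom.coe_mk, Pi.zero_apply] at this
        linarith
  have hrn := LinearMap.finrank_range_add_finrank_ker (cobd src tgt)
  have hrn2 := LinearMap.finrank_range_add_finrank_ker f
  have hr1 : Module.finrank ℝ (LinearMap.range f) = 1 := by
    have : LinearMap.range f = ⊤ := by
      rw [LinearMap.range_eq_top]
      apply LinearMap.surjective
      intro h; rw [h] at hf1; exact hf1 rfl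
    rw [this]; simp
  rw [Module.finrank_fintype_fun_eq_card] at hrn hrn2
  have heq : LinearMap.range (cobd src tgt) = LinearMap.ker f :=
    Submodule.eq_of_le_of_finrank_le hf2 (by omega)
  refine ⟨(f (fun e => (ind e : ℝ)))⁻¹ • f, ?_, ?_⟩
  · simp only [LinearMap.smul_apply, smul_eq_mul]
    exact inv_mul_cancel₀ hf1
  · intro α
    have : ((f (fun e => (ind e : ℝ)))⁻¹ • f) α = 0 ↔ α ∈ LinearMap.ker f := by
      simp only [LinearMap.smul_apply, smul_eq_mul, LinearMap.mem_ker, mul_eq_zero, inv_eq_zero]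
      tauto
    rw [this, ← heq]
    constructor
    · rintro ⟨φ, rfl⟩; exact ⟨φ, fun e => rfl⟩
    · rintro ⟨φ, h⟩; exact ⟨φ, (funext h).symm⟩

/-- End vertex of a half-edge. -/
def hv {V E : Type*} (src tgt : E → V) (h : E × Bool) : V := if h.2 then tgt h.1 else src h.1

/-- Half-edges at a vertex. -/
def star' {V E : Type*} [Fintype E] [DecidableEq V] (src tgt : E → V) (v : V) :
    Finset (E × Bool) := Finset.univ.filter fun h => hv src tgt h = v

lemma mem_star' {V E : Type*} [Fintype E] [DecidableEq V] (src tgt : E → V) (v : V)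
    (h : E × Bool) : h ∈ star' src tgt v ↔ hv src tgt h = v := by simp [star']

lemma sum_star' {V E : Type*} [Fintype E] [DecidableEq V] (src tgt : E → V) (v : V)
    {M : Type*} [AddCommMonoid M] (F : E × Bool → M) :
    ∑ h ∈ star' src tgt v, F h =
      ∑ e, ((if src e = v then F (e, false) else 0) + (if tgt e = v then F (e, true) else 0)) := by
  unfold star'
  rw [Finset.sum_filter, Fintype.sum_prod_type]
  refine Finset.sum_congr rfl fun e _ => ?_
  simp [hv, add_comm]

lemma mdeg_eq {V E : Type*} [Fintype E] [DecidableEq V] (src tgt : E → V) (v : V) :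
    mdeg src tgt v = (star' src tgt v).card := by
  rw [Finset.card_eq_sum_ones, sum_star']; rfl

/-- Signed flow value of a half-edge. -/
noncomputable def hval {E : Type*} [DecidableEq E] (c : (E → ℝ) →ₗ[ℝ] ℝ) (h : E × Bool) : ℝ :=
  if h.2 then c (Pi.single h.1 1) else - c (Pi.single h.1 1)

lemma hval_not {E : Type*} [DecidableEq E] (c : (E → ℝ) →ₗ[ℝ] ℝ) (e : E) (b : Bool) :
    hval c (e, !b) = - hval c (e, b) := by cases b <;> simp [hval]

lemma c_eq_sum {E : Type*} [Fintype E] [DecidableEq E] (c : (E → ℝ) →ₗ[ℝ] ℝ) (α : E → ℝ) :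
    c α = ∑ e, α e * c (Pi.single e 1) := by
  conv_lhs => rw [← Finset.univ_sum_single α, map_sum]
  refine Finset.sum_congr rfl fun e _ => ?_
  rw [← smul_eq_mul, ← map_smul, ← Pi.single_smul]; simp

lemma flow_cons {V E : Type*} [Fintype V] [Fintype E] [DecidableEq V] [DecidableEq E]
    (src tgt : E → V) (c : (E → ℝ) →ₗ[ℝ] ℝ)
    (hc : ∀ α, c α = 0 ↔ ∃ φ : V → ℝ, ∀ e, α e = φ (tgt e) - φ (src e)) (v : V) :
    ∑ h ∈ star' src tgt v, hval c h = 0 := by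
  have h := (hc (cobd src tgt (Pi.single v 1))).2 ⟨_, fun e => rfl⟩
  rw [c_eq_sum] at h
  rw [sum_star']
  refine Eq.trans ?_ h
  clear h
  refine Finset.sum_congr rfl fun e _ => ?_
  simp only [cobd, LinearMap.coe_mk, AddHom.coe_mk, hval]
  by_cases h1 : src e = v <;> by_cases h2 : tgt e = v <;> simp [Pi.single_apply, h1, h2]

lemma deg_ge_two {V E : Type*} [Fintype V] [Fintype E] [DecidableEq V] [DecidableEq E]
    (src tgt : E → V) (c : (E → ℝ) →ₗ[ℝ] ℝ)
    (hflow : ∀ v, ∑ h ∈ star' src tgt v, hval c h = 0) (h : E × Bool) (hh : hval c h ≠ 0) :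
    2 ≤ mdeg src tgt (hv src tgt h) := by
  rw [mdeg_eq]
  have hmem : h ∈ star' src tgt (hv src tgt h) := (mem_star' _ _ _ _).2 rfl
  by_contra hlt
  have h1 : (star' src tgt (hv src tgt h)).card = 1 := by
    have := Finset.card_pos.2 ⟨h, hmem⟩
    omega
  obtain ⟨a, ha⟩ := Finset.card_eq_one.1 h1
  have := hflow (hv src tgt h)
  rw [ha] at this hmem
  rw [Finset.mem_singleton] at hmem
  rw [Finset.sum_singleton, ← hmem] at this
  exact hh this

lemma deg_two_all {V E : Type*} [Fintype V] [Fintype E] [DecidableEq V] [DecidableEq E]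
    (src tgt : E → V) (c : (E → ℝ) →ₗ[ℝ] ℝ)
    (hconn : (multiGraph src tgt Set.univ).Connected)
    (hc0 : ∃ e, c (Pi.single e 1) ≠ 0)
    (hflow : ∀ v, ∑ h ∈ star' src tgt v, hval c h = 0)
    (hdeg : ∀ h, hval c h ≠ 0 → mdeg src tgt (hv src tgt h) = 2) :
    ∀ h, hval c h ≠ 0 := by
  let P : V → Prop := fun v => ∀ h, hv src tgt h = v → hval c h ≠ 0
  have hP : ∀ h, hval c h ≠ 0 → P (hv src tgt h) := by
    intro h hh k hk
    have h2 := hdeg h hh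
    rw [mdeg_eq] at h2
    obtain ⟨a, b, hab, hs⟩ := Finset.card_eq_two.1 h2
    have hf := hflow (hv src tgt h)
    have m1 : h ∈ star' src tgt (hv src tgt h) := (mem_star' _ _ _ _).2 rfl
    have m2 : k ∈ star' src tgt (hv src tgt h) := (mem_star' _ _ _ _).2 hk
    rw [hs] at m1 m2 hf
    rw [Finset.sum_pair hab] at hf
    simp only [Finset.mem_insert, Finset.mem_singleton] at m1 m2
    intro hk0
    rcases m1 with rfl | rfl <;> rcases m2 with rfl | rfl
    · exact hh hk0
    · exact hh (by linarith)
    · exact hh (by linarith)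
    · exact hh hk0
  have hedge : ∀ e b, P (hv src tgt (e, b)) → P (hv src tgt (e, !b)) := by
    intro e b hp
    have := hp (e, b) rfl
    exact hP (e, !b) (by rw [hval_not]; exact neg_ne_zero.2 this)
  obtain ⟨e, he⟩ := hc0
  have hall : ∀ v, P v := by
    refine prop_of_conn hconn P ?_ (hv src tgt (e, true)) (hP _ (by simpa [hval] using he))
    rintro a b ⟨_, ⟨e, _, rfl, rfl⟩ | ⟨e, _, rfl, rfl⟩⟩ hp
    · exact hedge e false hp
    · exact hedge e true hp
  exact fun h => hall _ h rfl

/-- Orientation of a connected 2-regular graph. -/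
lemma orient {V E : Type*} [Fintype V] [Fintype E] [DecidableEq V] [DecidableEq E]
    (src tgt : E → V) (c : (E → ℝ) →ₗ[ℝ] ℝ)
    (hconn : (multiGraph src tgt Set.univ).Connected)
    (hc0 : ∃ e, c (Pi.single e 1) ≠ 0)
    (hflow : ∀ v, ∑ h ∈ star' src tgt v, hval c h = 0)
    (hdeg : ∀ v, mdeg src tgt v = 2) :
    ∃ σ : E × Bool → Bool, (∀ e b, σ (e, !b) = !σ (e, b)) ∧
      ∀ v, ∃ a b, a ≠ b ∧ star' src tgt v = {a, b} ∧ σ a = true ∧ σ b = false := by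
  have hne := deg_two_all src tgt c hconn hc0 hflow (fun h _ => hdeg _)
  refine ⟨fun h => decide (0 < hval c h), ?_, ?_⟩
  · intro e b
    have h1 := hne (e, b)
    simp only [hval_not]
    rcases lt_or_gt_of_ne h1 with h | h
    · have : ¬ 0 < hval c (e, b) := by linarith
      simp [this, h]
    · have : ¬ 0 < - hval c (e, b) := by linarith
      simp [h, h.le]
  · intro v
    have h2 := hdeg v
    rw [mdeg_eq] at h2
    obtain ⟨a, b, hab, hs⟩ := Finset.card_eq_two.1 h2
    have hf := hflow v
    rw [hs, Finset.sum_pair hab] at hf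
    rcases lt_or_gt_of_ne (hne a) with h | h
    · refine ⟨b, a, hab.symm, by rw [hs, Finset.pair_comm], ?_, ?_⟩
      · simp; linarith
      · simp; linarith
    · refine ⟨a, b, hab, hs, ?_, ?_⟩
      · simp; linarith
      · simp; linarith

lemma mdeg_pos {V E : Type*} [Fintype V] [Fintype E] [DecidableEq V] [Nonempty V]
    (src tgt : E → V) (hconn : (multiGraph src tgt Set.univ).Connected)
    (hbetti : Fintype.card E = Fintype.card V) (v : V) : 1 ≤ mdeg src tgt v := by
  have hE : 0 < Fintype.card E := by rw [hbetti]; exact Fintype.card_pos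
  obtain ⟨e⟩ := Fintype.card_pos_iff.1 hE
  have key : ∃ h, hv src tgt h = v := by
    refine prop_of_conn hconn (fun v => ∃ h, hv src tgt h = v) ?_ (src e) ⟨(e, false), rfl⟩ v
    rintro a b ⟨_, ⟨e, _, rfl, rfl⟩ | ⟨e, _, rfl, rfl⟩⟩ _
    · exact ⟨(e, true), rfl⟩
    · exact ⟨(e, false), rfl⟩
  obtain ⟨h, hh⟩ := key
  rw [mdeg_eq]
  exact Finset.card_pos.2 ⟨h, (mem_star' _ _ _ _).2 hh⟩

lemma sum_mdeg {V E : Type*} [Fintype V] [Fintype E] [DecidableEq V]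
    (src tgt : E → V) : ∑ v, mdeg src tgt v = 2 * Fintype.card E := by
  unfold mdeg
  rw [Finset.sum_comm]
  simp [Finset.sum_add_distrib]
  omega

lemma two_regular {V E : Type*} [Fintype V] [Fintype E] [DecidableEq V] [Nonempty V]
    (src tgt : E → V) (hconn : (multiGraph src tgt Set.univ).Connected)
    (hbetti : Fintype.card E = Fintype.card V)
    (h1 : ¬ ∃ v : V, mdeg src tgt v = 1) (v : V) : mdeg src tgt v = 2 := by
  have hge : ∀ v, 2 ≤ mdeg src tgt v := fun v => by
    have := mdeg_pos src tgt hconn hbetti v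
    have : mdeg src tgt v ≠ 1 := fun h => h1 ⟨v, h⟩
    omega
  have hs : ∑ v : V, 2 = ∑ v, mdeg src tgt v := by
    rw [sum_mdeg, hbetti]; simp [mul_comm]
  exact ((Finset.sum_eq_sum_iff_of_le (fun v _ => hge v)).1 hs v (Finset.mem_univ v)).symm

lemma ms_nonempty {V E : Type*} [Fintype V] [Fintype E] [DecidableEq V] [DecidableEq E]
    [Nonempty V] (src tgt : E → V) (m : V → ℝ) (hm : ∀ v, 0 < m v) (mE : E → ℝ)
    (hw : (∀ v, m v = (mdeg src tgt v : ℝ)) ∨ (∀ v, m v = 1))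
    (hE : ∀ e, mE e = 1)
    (hconn : (multiGraph src tgt Set.univ).Connected)
    (hpos : ∀ v, 1 ≤ mdeg src tgt v)
    (c : (E → ℝ) →ₗ[ℝ] ℝ) (hc0 : ∃ e, c (Pi.single e 1) ≠ 0)
    (hc : ∀ α, c α = 0 ↔ ∃ φ : V → ℝ, ∀ e, α e = φ (tgt e) - φ (src e))
    (hflow : ∀ v, ∑ h ∈ star' src tgt v, hval c h = 0)
    (h1 : ∃ v : V, mdeg src tgt v = 1) : msSet src tgt m mE ≠ ∅ := by
  obtain ⟨v, hv1⟩ := h1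
  have hex : ∃ h, hval c h ≠ 0 ∧ mdeg src tgt (hv src tgt h) ≠ 2 := by
    by_contra hcon
    push Not at hcon
    have hall := deg_two_all src tgt c hconn hc0 hflow hcon
    have hp := hpos v
    rw [mdeg_eq] at hp
    obtain ⟨h, hh⟩ := Finset.card_pos.1 hp
    rw [mem_star'] at hh
    have := hcon h (hall h)
    rw [hh] at this
    omega
  obtain ⟨⟨e0, b⟩, hne, h2⟩ := hex
  have hce : c (Pi.single e0 1) ≠ 0 := by
    intro h0
    apply hne
    cases b <;> simp [hval, h0]
  have hge := deg_ge_two src tgt c hflow _ hne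
  have hg : ∀ α : E → ℝ, ∃ (s : ℝ) (φ : V → ℝ),
      ∀ e, α e = (if e = e0 then s else 0) + (φ (tgt e) - φ (src e)) := by
    intro α
    obtain ⟨φ, hφ⟩ := (hc (α - (c α / c (Pi.single e0 1)) • Pi.single e0 1)).1 (by
      rw [map_sub, map_smul, smul_eq_mul]; field_simp; ring)
    refine ⟨c α / c (Pi.single e0 1), φ, fun e => ?_⟩
    have := hφ e
    simp only [Pi.sub_apply, Pi.smul_apply, Pi.single_apply, smul_eq_mul, mul_ite, mul_one,
      mul_zero] at this
    linarith
  have hu : src e0 = hv src tgt (e0, b) ∨ tgt e0 = hv src tgt (e0, b) := by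
    cases b <;> simp [hv]
  refine gap_exists src tgt m hm mE hE e0 _ hu hg
    (trace_ineq src tgt m hm hw e0 _ hu ?_ (by omega) ?_ ?_)
  · intro e he hl
    obtain ⟨s, φ, hφ⟩ := hg (Pi.single e 1)
    have := hφ e
    simp [he, hl] at this
  · exact deg_ge_two src tgt c hflow (e0, false) (by simpa [hval] using hce)
  · exact deg_ge_two src tgt c hflow (e0, true) (by simpa [hval] using hce)

lemma spec_subset {V E : Type*} [Fintype V] [Fintype E] [DecidableEq V]
    [Nonempty V] (src tgt : E → V) (m : V → ℝ) (hm : ∀ v, 0 < m v) (mE : E → ℝ)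
    (hE : ∀ e, 0 ≤ mE e) (α : E → ℝ) :
    realSpec (dml src tgt m mE α) ⊆
      Set.Icc 0 (2 * Finset.univ.sup' Finset.univ_nonempty (rho src tgt m mE)) := by
  intro x hx
  have hA := dml_herm src tgt m hm mE α
  have hx' : (x : ℂ) ∈ spectrum ℂ (dml src tgt m mE α) := hx
  rw [hA.spectrum_eq_image_range] at hx'
  obtain ⟨y, ⟨i, rfl⟩, hy⟩ := hx'
  have hy' : hA.eigenvalues i = x := by
    have : ((hA.eigenvalues i : ℝ) : ℂ) = (x : ℂ) := hy
    exact_mod_cast this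
  rw [← hy']
  exact eig_bounds hA _ (dml_form_nonneg src tgt m hm mE hE α) (dml_form_le src tgt m hm mE hE α) i

lemma dml_const {V E : Type*} [Fintype V] [Fintype E] [DecidableEq V]
    (src tgt : E → V) (m : V → ℝ) (μ : ℝ) (hμ : 0 < μ) (hm : ∀ v, m v = μ) (mE : E → ℝ)
    (hE : ∀ e, mE e = 1) (α : E → ℝ) (u : V) :
    (dml src tgt m mE α *ᵥ (fun _ => 1)) u = ((rho src tgt m mE u : ℝ) : ℂ) - ((1 / μ : ℝ) : ℂ) *
      ∑ h ∈ star' src tgt u, (if h.2 then Complex.exp ((α h.1 : ℂ) * Complex.I)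
        else Complex.exp (-((α h.1 : ℂ) * Complex.I))) := by
  have hs : Real.sqrt μ * Real.sqrt μ = μ := Real.mul_self_sqrt hμ.le
  have hconj : ∀ e, starRingEnd ℂ (Complex.exp ((α e : ℂ) * Complex.I)) =
      Complex.exp (-((α e : ℂ) * Complex.I)) := by
    intro e; rw [← Complex.exp_conj]; simp
  rw [sum_star']
  simp only [mulVec, dotProduct, dml, dmlPhase, hm, hE, hs, mul_one, Finset.sum_sub_distrib, hconj]
  rw [← Finset.mul_sum, Finset.sum_comm]
  congr 1
  · simp
  · congr 1
    refine Finset.sum_congr rfl fun e _ => ?_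
    simp only [Complex.ofReal_one, one_mul, Finset.sum_add_distrib, ite_and]
    by_cases h1 : src e = u <;> by_cases h2 : tgt e = u <;> simp [h1, h2, add_comm]

lemma full_cover {V E : Type*} [Fintype V] [Fintype E] [DecidableEq V] [DecidableEq E]
    [Nonempty V] (src tgt : E → V) (m : V → ℝ) (μ : ℝ) (hμ : 0 < μ) (hm : ∀ v, m v = μ)
    (mE : E → ℝ) (hE : ∀ e, mE e = 1)
    (hdeg : ∀ v, mdeg src tgt v = 2)
    (σ : E × Bool → Bool) (hσ : ∀ e b, σ (e, !b) = !σ (e, b))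
    (hst : ∀ v, ∃ a b, a ≠ b ∧ star' src tgt v = {a, b} ∧ σ a = true ∧ σ b = false)
    (x : ℝ)
    (hx : x ∈ Set.Icc 0 (2 * Finset.univ.sup' Finset.univ_nonempty (rho src tgt m mE))) :
    ∃ α : E → ℝ, x ∈ realSpec (dml src tgt m mE α) := by
  have hrho : ∀ v, rho src tgt m mE v = 2 / μ := by
    intro v
    unfold rho edgeSumAt
    rw [hm]
    congr 1
    have := hdeg v
    unfold mdeg at this
    simp only [hE]
    exact_mod_cast this
  have hsup : Finset.univ.sup' Finset.univ_nonempty (rho src tgt m mE) = 2 / μ := by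
    apply le_antisymm
    · exact Finset.sup'_le _ _ fun v _ => (hrho v).le
    · obtain ⟨v⟩ := ‹Nonempty V›
      rw [← hrho v]
      exact Finset.le_sup' (rho src tgt m mE) (Finset.mem_univ v)
  rw [hsup] at hx
  obtain ⟨hx0, hx1⟩ := hx
  have hx2 : x * μ ≤ 4 := by
    have := mul_le_mul_of_nonneg_right hx1 hμ.le
    have h4 : 2 * (2 / μ) * μ = 4 := by field_simp; norm_num
    linarith
  have hx3 : 0 ≤ x * μ := mul_nonneg hx0 hμ.le
  set κ := Real.arccos (1 - x * μ / 2) with hκ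
  have hcos : Real.cos κ = 1 - x * μ / 2 := Real.cos_arccos (by linarith) (by linarith)
  refine ⟨fun e => if σ (e, true) then κ else -κ, ?_⟩
  set α : E → ℝ := fun e => if σ (e, true) then κ else -κ with hα
  have hF : ∀ h : E × Bool, (if h.2 then Complex.exp ((α h.1 : ℂ) * Complex.I)
        else Complex.exp (-((α h.1 : ℂ) * Complex.I))) =
        if σ h then Complex.exp ((κ : ℂ) * Complex.I) else Complex.exp (-(κ : ℂ) * Complex.I) := by
    rintro ⟨e, b⟩
    have := hσ e true
    cases b
    · simp only [Bool.not_true] at this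
      rw [this]
      by_cases h : σ (e, true) = true <;> simp [hα, h]
    · by_cases h : σ (e, true) = true <;> simp [hα, h]
  have heig : dml src tgt m mE α *ᵥ (fun _ => 1) = (x : ℂ) • (fun _ : V => (1 : ℂ)) := by
    ext u
    rw [dml_const src tgt m μ hμ hm mE hE α u, hrho]
    obtain ⟨a, b, hab, hs, ha, hb⟩ := hst u
    simp only [hF]
    rw [hs, Finset.sum_pair hab]
    simp only [ha, hb, if_true, Bool.false_eq_true, if_false]
    rw [← Complex.two_cos, ← Complex.ofReal_cos, hcos]
    have : (μ : ℂ) ≠ 0 := by exact_mod_cast hμ.ne'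
    simp only [Pi.smul_apply, smul_eq_mul, mul_one]
    push_cast
    field_simp
    ring
  change (x : ℂ) ∈ spectrum ℂ (dml src tgt m mE α)
  rw [← Matrix.spectrum_toLin']
  apply Module.End.HasEigenvalue.mem_spectrum
  refine Module.End.hasEigenvalue_of_hasEigenvector (x := fun _ : V => (1 : ℂ)) ⟨?_, ?_⟩
  · rw [Module.End.mem_eigenspace_iff, Matrix.toLin'_apply, heig]
  · obtain ⟨v⟩ := ‹Nonempty V›
    intro h
    simpa using congrFun h v

lemma union_eq {V E : Type*} [Fintype V] [Fintype E] [DecidableEq V]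
    (src tgt : E → V) (ind : E → ℤ) (m : V → ℝ) (mE : E → ℝ)
    (c : (E → ℝ) →ₗ[ℝ] ℝ) (hc1 : c (fun e => (ind e : ℝ)) = 1)
    (hc : ∀ α, c α = 0 ↔ ∃ φ : V → ℝ, ∀ e, α e = φ (tgt e) - φ (src e)) (α : E → ℝ) :
    realSpec (dml src tgt m mE α) ⊆
      ⋃ t : ℝ, realSpec (dml src tgt m mE (fun e => t * (ind e : ℝ))) := by
  obtain ⟨φ, hφ⟩ := (hc (α - c α • fun e => (ind e : ℝ))).1 (by
    rw [map_sub, map_smul, hc1]; simp)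
  refine Set.subset_iUnion_of_subset (c α) (dml_gauge src tgt m mE _ α φ fun e => ?_).subset
  have := hφ e
  simp only [Pi.sub_apply, Pi.smul_apply, smul_eq_mul] at this
  linarith

/-- The `ℤ`-cover. -/
def cov {V E : Type*} (src tgt : E → V) (ind : E → ℤ) : SimpleGraph (ℤ × V) :=
  SimpleGraph.fromRel (fun x y : ℤ × V =>
        ∃ p : ℤ × E, x = (p.1, src p.2) ∧ y = (p.1 + ind p.2, tgt p.2))

/-- Traverse a half-edge in the cover. -/
def trav {V E : Type*} (src tgt : E → V) (ind : E → ℤ) (n : ℤ) (h : E × Bool) : ℤ × V :=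
  (if h.2 then n - ind h.1 else n + ind h.1, hv src tgt (h.1, !h.2))

lemma trav_back {V E : Type*} (src tgt : E → V) (ind : E → ℤ) (n : ℤ) (h : E × Bool) :
    trav src tgt ind (trav src tgt ind n h).1 (h.1, !h.2) = (n, hv src tgt h) := by
  obtain ⟨e, b⟩ := h
  cases b <;> simp [trav, hv]

lemma cov_adj {V E : Type*} [Fintype E] [DecidableEq V] (src tgt : E → V) (ind : E → ℤ)
    (x y : ℤ × V) : (cov src tgt ind).Adj x y ↔
      x ≠ y ∧ ∃ h ∈ star' src tgt x.2, y = trav src tgt ind x.1 h := by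
  unfold cov
  rw [SimpleGraph.fromRel_adj]
  refine and_congr_right fun _ => ?_
  constructor
  · rintro (⟨p, rfl, rfl⟩ | ⟨p, rfl, rfl⟩)
    · exact ⟨(p.2, false), (mem_star' _ _ _ _).2 (by simp [hv]), by simp [trav, hv]⟩
    · exact ⟨(p.2, true), (mem_star' _ _ _ _).2 (by simp [hv]), by simp [trav, hv]⟩
  · rintro ⟨⟨e, b⟩, hm, rfl⟩
    rw [mem_star'] at hm
    obtain ⟨n, v⟩ := x
    simp only at hm
    subst hm
    cases b
    · left; exact ⟨(n, e), by simp [hv], by simp [trav, hv]⟩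
    · right; exact ⟨(n - ind e, e), by simp [trav, hv], by simp [hv]⟩

lemma lattice_no_leaf {V E : Type*} [Fintype E] [DecidableEq V] (src tgt : E → V) (ind : E → ℤ)
    (F : cov src tgt ind ≃g SimpleGraph.fromRel (fun a b : ℤ => b = a + 1)) (v : V)
    (h1 : mdeg src tgt v = 1) : False := by
  rw [mdeg_eq] at h1
  obtain ⟨a, ha⟩ := Finset.card_eq_one.1 h1
  have key : ∀ k : ℤ, (SimpleGraph.fromRel (fun a b : ℤ => b = a + 1)).Adj (F (0, v)) k →
      F.symm k = trav src tgt ind 0 a := by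
    intro k hk
    have : (cov src tgt ind).Adj (0, v) (F.symm k) := by
      rw [← F.map_adj_iff]; simpa using hk
    rw [cov_adj] at this
    obtain ⟨_, h, hh, he⟩ := this
    simp only [ha, Finset.mem_singleton] at hh
    rw [he, hh]
  have k1 := key (F (0, v) + 1) (by rw [SimpleGraph.fromRel_adj]; simp)
  have k2 := key (F (0, v) - 1) (by rw [SimpleGraph.fromRel_adj]; simp; omega)
  have := F.symm.injective (k1.trans k2.symm)
  omega

lemma cycle_lattice {V E : Type*} [Fintype E] [DecidableEq V] [DecidableEq E] [Nonempty V]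
    (src tgt : E → V) (ind : E → ℤ)
    (hcovconn : (cov src tgt ind).Connected)
    (hnoloop : ∀ p : ℤ × E, (p.1, src p.2) ≠ (p.1 + ind p.2, tgt p.2))
    (σ : E × Bool → Bool) (hσ : ∀ e b, σ (e, !b) = !σ (e, b))
    (hst : ∀ v, ∃ a b, a ≠ b ∧ star' src tgt v = {a, b} ∧ σ a = true ∧ σ b = false) :
    Nonempty (cov src tgt ind ≃g SimpleGraph.fromRel (fun a b : ℤ => b = a + 1)) := by
  choose a b hab hs ha hb using hst
  have hva : ∀ v, hv src tgt (a v) = v := fun v => by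
    rw [← mem_star', hs]; simp
  have hvb : ∀ v, hv src tgt (b v) = v := fun v => by
    rw [← mem_star', hs]; simp
  have hcase : ∀ h, h = if σ h then a (hv src tgt h) else b (hv src tgt h) := by
    intro h
    have hm : h ∈ star' src tgt (hv src tgt h) := (mem_star' _ _ _ _).2 rfl
    rw [hs] at hm
    simp only [Finset.mem_insert, Finset.mem_singleton] at hm
    rcases hm with hm | hm
    · have : σ h = true := by rw [hm]; exact ha _
      simp only [this, if_true]; exact hm
    · have : σ h = false := by rw [hm]; exact hb _
      simp only [this, Bool.false_eq_true, if_false]; exact hm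
  have hoa : ∀ v, b (hv src tgt ((a v).1, !(a v).2)) = ((a v).1, !(a v).2) := by
    intro v
    have := hcase ((a v).1, !(a v).2)
    rw [hσ, Prod.mk.eta, ha] at this
    simpa using this.symm
  have hob : ∀ v, a (hv src tgt ((b v).1, !(b v).2)) = ((b v).1, !(b v).2) := by
    intro v
    have := hcase ((b v).1, !(b v).2)
    rw [hσ, Prod.mk.eta, hb] at this
    simpa using this.symm
  let T : Equiv.Perm (ℤ × V) :=
    { toFun := fun x => trav src tgt ind x.1 (a x.2)
      invFun := fun x => trav src tgt ind x.1 (b x.2)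
      left_inv := by
        intro x
        change trav src tgt ind (trav src tgt ind x.1 (a x.2)).1
          (b (hv src tgt ((a x.2).1, !(a x.2).2))) = x
        rw [hoa, trav_back, hva]
      right_inv := by
        intro x
        change trav src tgt ind (trav src tgt ind x.1 (b x.2)).1
          (a (hv src tgt ((b x.2).1, !(b x.2).2))) = x
        rw [hob, trav_back, hvb] }
  have hadj : ∀ x y, (cov src tgt ind).Adj x y ↔ x ≠ y ∧ (y = T x ∨ x = T y) := by
    intro x y
    rw [cov_adj, hs]
    have h2 : x = T y ↔ y = T.symm x := by
      rw [Equiv.eq_symm_apply]; exact eq_comm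
    rw [h2]
    simp only [Finset.mem_insert, Finset.mem_singleton, exists_eq_or_imp, exists_eq_left]
    exact Iff.rfl
  obtain ⟨v0⟩ := ‹Nonempty V›
  let x0 : ℤ × V := (0, v0)
  have hsucc : ∀ j : ℤ, (T ^ (j + 1)) x0 = T ((T ^ j) x0) := by
    intro j; rw [add_comm, _root_.zpow_add, _root_.zpow_one]; rfl
  have hsurj : ∀ y, ∃ j : ℤ, (T ^ j) x0 = y := by
    refine prop_of_conn hcovconn (fun y => ∃ j : ℤ, (T ^ j) x0 = y) ?_ x0 ⟨0, by simp⟩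
    rintro x y hxy ⟨j, rfl⟩
    rw [hadj] at hxy
    rcases hxy.2 with h | h
    · exact ⟨j + 1, by rw [hsucc, h]⟩
    · refine ⟨j - 1, T.injective ?_⟩
      rw [← hsucc, ← h, sub_add_cancel]
  have hinj : Function.Injective (fun j : ℤ => (T ^ j) x0) := by
    intro j k hjk
    by_contra hne
    have hd : (T ^ (k - j)) x0 = x0 := by
      simp only at hjk
      rw [sub_eq_neg_add, _root_.zpow_add, Equiv.Perm.mul_apply, ← hjk, ← Equiv.Perm.mul_apply,
        ← _root_.zpow_add]
      simp
    have hd0 : k - j ≠ 0 := fun h => hne (by omega)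
    have hfin : (Set.univ : Set (ℤ × V)).Finite := by
      refine ((Set.finite_Ico (0:ℤ) |k - j|).image (fun i : ℤ => (T ^ i) x0)).subset ?_
      intro y _
      obtain ⟨i, rfl⟩ := hsurj y
      refine ⟨i % (k - j), ⟨Int.emod_nonneg _ hd0, Int.emod_lt_abs _ hd0⟩, ?_⟩
      simp only
      conv_rhs => rw [← Int.emod_add_mul_ediv i (k - j), _root_.zpow_add, Equiv.Perm.mul_apply, _root_.zpow_mul,
        Equiv.Perm.zpow_apply_eq_self_of_apply_eq_self hd]
    have hinf : Infinite (ℤ × V) := inferInstance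
    exact hinf.not_finite (Set.finite_univ_iff.1 hfin)
  let f : ℤ ≃ ℤ × V := Equiv.ofBijective (fun j : ℤ => (T ^ j) x0) ⟨hinj, hsurj⟩
  have hf : ∀ j, f (j + 1) = T (f j) := hsucc
  refine ⟨RelIso.symm ⟨f, ?_⟩⟩
  intro j k
  rw [hadj, SimpleGraph.fromRel_adj, ← hf, ← hf]
  simp only [ne_eq, f.injective.eq_iff]

/-- Higuchi–Shirai's conjecture for `ℤ`-periodic trees. Model the
`ℤ`-periodic graph over the finite connected quotient `(V, E, src, tgt)` (Betti
number 1, i.e. `|E| = |V|`) via the index `ind : E → ℤ`, and assume the covering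
graph is a tree (connected, acyclic, no loops). With standard or combinatorial
weights, TFAE: (1) the periodic Laplacian has full spectrum `[0, 2ρ_∞]` (its
spectrum being `⋃_t σ(Δ_{t·ind})` by Floquet theory); (2) its spectral gaps set is
empty; (3) the covering graph is the lattice `ℤ`; (4) the magnetic spectral gaps set
of the quotient is empty; (5) the quotient is a cycle graph (2-regular); (6) the
quotient has no vertex of degree 1. -/
theorem stmt18 {V E : Type*} [Fintype V] [Fintype E] [DecidableEq V] [DecidableEq E]
    [Nonempty V] (src tgt : E → V) (ind : E → ℤ) (m : V → ℝ) (mE : E → ℝ)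
    (hweights : ((∀ v, m v = (mdeg src tgt v : ℝ)) ∧ ∀ e, mE e = 1) ∨
                ((∀ v, m v = 1) ∧ ∀ e, mE e = 1))
    (hconn : (multiGraph src tgt Set.univ).Connected)
    (hbetti : Fintype.card E = Fintype.card V)
    (hcovconn : (SimpleGraph.fromRel (fun x y : ℤ × V =>
        ∃ p : ℤ × E, x = (p.1, src p.2) ∧ y = (p.1 + ind p.2, tgt p.2))).Connected)
    (hcovacyc : (SimpleGraph.fromRel (fun x y : ℤ × V =>
        ∃ p : ℤ × E, x = (p.1, src p.2) ∧ y = (p.1 + ind p.2, tgt p.2))).IsAcyclic)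
    (hnoloop : ∀ p : ℤ × E, (p.1, src p.2) ≠ (p.1 + ind p.2, tgt p.2)) :
    List.TFAE
      [ -- (1) full spectrum property for the periodic Laplacian
        (⋃ t : ℝ, realSpec (dml src tgt m mE (fun e => t * (ind e : ℝ)))) =
          Set.Icc 0 (2 * Finset.univ.sup' Finset.univ_nonempty (rho src tgt m mE)),
        -- (2) the spectral gaps set of the periodic Laplacian is empty
        Set.Icc 0 (2 * Finset.univ.sup' Finset.univ_nonempty (rho src tgt m mE)) \
          (⋃ t : ℝ, realSpec (dml src tgt m mE (fun e => t * (ind e : ℝ)))) = ∅,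
        -- (3) the covering graph is the lattice ℤ
        Nonempty ((SimpleGraph.fromRel (fun x y : ℤ × V =>
            ∃ p : ℤ × E, x = (p.1, src p.2) ∧ y = (p.1 + ind p.2, tgt p.2))) ≃g
          SimpleGraph.fromRel (fun a b : ℤ => b = a + 1)),
        -- (4) the magnetic spectral gaps set of the quotient is empty
        msSet src tgt m mE = ∅,
        -- (5) the quotient is a cycle graph
        ∀ v : V, mdeg src tgt v = 2,
        -- (6) the quotient has no vertex of degree 1
        ¬ ∃ v : V, mdeg src tgt v = 1 ] := by
  classical
  have hE : ∀ e, mE e = 1 := by rcases hweights with h | h <;> exact h.2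
  have hw : (∀ v, m v = (mdeg src tgt v : ℝ)) ∨ (∀ v, m v = 1) :=
    hweights.imp (fun h => h.1) (fun h => h.1)
  have hpos := mdeg_pos src tgt hconn hbetti
  have hm : ∀ v, 0 < m v := by
    intro v
    rcases hw with h | h
    · rw [h v]; exact_mod_cast hpos v
    · rw [h v]; exact one_pos
  obtain ⟨c, hc1, hc⟩ := flow_exists src tgt ind hconn hbetti hcovconn
  have hflow := flow_cons src tgt c hc
  have hc0 : ∃ e, c (Pi.single e 1) ≠ 0 := by
    by_contra hcon
    push Not at hcon
    rw [c_eq_sum] at hc1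
    simp [hcon] at hc1
  tfae_have 1 → 2 := by
    intro h
    rw [h, Set.sdiff_self]
  tfae_have 2 → 4 := by
    intro h
    unfold msSet
    rw [Set.sdiff_eq_empty] at h ⊢
    refine h.trans (Set.iUnion_subset fun t => ?_)
    exact Set.subset_iUnion (fun α : E → ℝ => realSpec (dml src tgt m mE α))
      (fun e => t * (ind e : ℝ))
  tfae_have 4 → 6 := by
    intro h4 h1
    exact ms_nonempty src tgt m hm mE hw hE hconn hpos c hc0 hc hflow h1 h4
  tfae_have 6 → 5 := two_regular src tgt hconn hbetti
  tfae_have 5 → 1 := by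
    intro hdeg
    obtain ⟨σ, hσ, hst⟩ := orient src tgt c hconn hc0 hflow hdeg
    have hμ : ∃ μ : ℝ, 0 < μ ∧ ∀ v, m v = μ := by
      rcases hw with h | h
      · exact ⟨2, two_pos, fun v => by rw [h, hdeg]; norm_num⟩
      · exact ⟨1, one_pos, h⟩
    obtain ⟨μ, hμ0, hmμ⟩ := hμ
    apply Set.Subset.antisymm
    · exact Set.iUnion_subset fun t => spec_subset src tgt m hm mE (fun e => by simp [hE e]) _
    · intro x hx
      obtain ⟨α, hα⟩ := full_cover src tgt m μ hμ0 hmμ mE hE hdeg σ hσ hst x hx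
      exact union_eq src tgt ind m mE c hc1 hc α hα
  tfae_have 5 → 3 := by
    intro hdeg
    obtain ⟨σ, hσ, hst⟩ := orient src tgt c hconn hc0 hflow hdeg
    exact cycle_lattice src tgt ind hcovconn hnoloop σ hσ hst
  tfae_have 3 → 6 := by
    rintro ⟨F⟩ ⟨v, hv1⟩
    exact lattice_no_leaf src tgt ind F v hv1
  tfae_finish
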